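/- arXiv:2307.12665 — 2 statements merged into one kernel-verified Lean document; each statement's English description precedes it below -/
import Mathlib

section
/- For every L > 0, m > 0 and K > 0 there exists a constant C₁ > 0, depending only on L, m and K, such that for every T > 0, λ ≥ 1, ε > 0 and every regularized solution u on [0,T] with ∫₀^L u(0,x) dx ≤ m and ∫₀^L u_x(0,x)² dx ≤ K², one has 0 < u(t,x) ≤ C₁ for all (t,x) ∈ [0,T] × 𝕋_L. -/
/-!
Along `u_t + (f(u) u_xxx)_x + g(u) = 0` the mass and the Dirichlet energy are nonincreasing as soon
as the mobility `f` is nonnegative and the absorption `g` is nonnegative and nondecreasing: the flux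
integrates to zero over a period, so `d/dt ∫ u = -∫ g(u)`, and integration by parts gives
`½ d/dt ∫ u_x² = -∫ f(u) u_xxx² - ∫ g'(u) u_x²`. In one dimension these two quantities control the
supremum: the oscillation of `u` over a period is at most `∫ |u_x| ≤ (L ∫ u_x²)^(1/2)`, and `u`
lies below its mean somewhere.
-/

open MeasureTheory Set

noncomputable section

/-- The regularized mobility `f_ε(s) = s⁴ / (ε + s²)` (which also equals `0` at `s = 0`). -/
def fe (ε s : ℝ) : ℝ := s ^ 4 / (ε + s ^ 2)

/-- A regularized solution on `[0,T]`: a function `u`, smooth on `[0,T] × ℝ` and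
`L`-periodic in `x`, positive everywhere, satisfying
`u_t + ∂_x(f_ε(u) ∂_x³ u) + u^λ = 0` on `[0,T] × ℝ`. -/
def IsRegSol (L T lam ε : ℝ) (u : ℝ → ℝ → ℝ) : Prop :=
  ContDiffOn ℝ (⊤ : ℕ∞) (fun p : ℝ × ℝ => u p.1 p.2)
      (Set.Icc (0 : ℝ) T ×ˢ (Set.univ : Set ℝ)) ∧
  (∀ t x : ℝ, u t (x + L) = u t x) ∧
  (∀ t x : ℝ, 0 < u t x) ∧
  (∀ t ∈ Set.Icc (0 : ℝ) T, ∀ x : ℝ,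
    derivWithin (fun s => u s x) (Set.Icc (0 : ℝ) T) t
      + deriv (fun y => fe ε (u t y) * iteratedDeriv 3 (u t) y) x
      + u t x ^ lam = 0)

open Function (Periodic uncurry)

/-! ### One-dimensional Sobolev bound -/

section Sobolev

variable {a b : ℝ}

lemma sq_intervalIntegral_le {h : ℝ → ℝ} (hab : a ≤ b) (hh : IntervalIntegrable h volume a b)
    (hh2 : IntervalIntegrable (fun x => h x ^ 2) volume a b) :
    (∫ x in a..b, h x) ^ 2 ≤ (b - a) * ∫ x in a..b, h x ^ 2 := by
  rcases hab.eq_or_lt with rfl | hlt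
  · simp
  have hba := sub_pos.2 hlt
  have jensen : (⨍ x in a..b, h x) ^ 2 ≤ ⨍ x in a..b, h x ^ 2 :=
    even_two.convexOn_pow.map_set_average_le (by fun_prop) isClosed_univ (by simp [hba.ne'])
      (by simp) (by simp) hh.def' hh2.def'
  rw [interval_average_eq, interval_average_eq, smul_eq_mul, smul_eq_mul, mul_pow, inv_pow,
    inv_mul_le_iff₀ (by positivity)] at jensen
  refine jensen.trans_eq ?_
  field_simp

variable {v : ℝ → ℝ} {x : ℝ}

lemma abs_sub_le_integral_abs_deriv {y : ℝ} (hv : ContDiff ℝ 1 v) (hx : x ∈ Icc a b)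
    (hy : y ∈ Icc a b) : |v x - v y| ≤ ∫ z in a..b, |deriv v z| := by
  have hv' := hv.continuous_deriv le_rfl
  calc |v x - v y| = |∫ z in y..x, deriv v z| := by
        rw [intervalIntegral.integral_deriv_of_contDiffOn_uIcc hv.contDiffOn]
    _ ≤ |(∫ z in y..x, |deriv v z|)| :=
        intervalIntegral.norm_integral_le_abs_integral_norm (f := deriv v)
    _ ≤ |(∫ z in a..b, |deriv v z|)| :=
        intervalIntegral.abs_integral_mono_interval
          (uIoc_subset_uIoc_of_uIcc_subset_uIcc <|
            uIcc_subset_uIcc (Icc_subset_uIcc hy) (Icc_subset_uIcc hx))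
          (.of_forall fun z => abs_nonneg _) (hv'.abs.intervalIntegrable _ _)
    _ = ∫ z in a..b, |deriv v z| :=
        abs_of_nonneg (intervalIntegral.integral_nonneg (hx.1.trans hx.2) fun z _ => abs_nonneg _)

lemma le_average_add_sqrt_integral_deriv_sq (hab : a < b) (hv : ContDiff ℝ 1 v)
    (hx : x ∈ Icc a b) :
    v x ≤ (∫ y in a..b, v y) / (b - a) + √((b - a) * ∫ y in a..b, deriv v y ^ 2) := by
  set S := √((b - a) * ∫ y in a..b, deriv v y ^ 2)
  have hv' := hv.continuous_deriv le_rfl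
  have total_variation_le : ∫ z in a..b, |deriv v z| ≤ S := by
    refine Real.le_sqrt_of_sq_le ?_
    simpa only [sq_abs] using sq_intervalIntegral_le hab.le (hv'.abs.intervalIntegrable a b)
      ((hv'.abs.pow 2).intervalIntegrable a b)
  have sub_le : ∀ y ∈ Icc a b, v x - S ≤ v y := fun y hy => by
    linarith [(abs_le.1 (abs_sub_le_integral_abs_deriv hv hx hy)).2]
  have average : (b - a) * (v x - S) ≤ ∫ y in a..b, v y := by
    simpa only [intervalIntegral.integral_const, smul_eq_mul] using
      intervalIntegral.integral_mono_on (μ := volume) hab.le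
        (continuous_const.intervalIntegrable a b) (hv.continuous.intervalIntegrable a b) sub_le
  rw [← sub_le_iff_le_add, le_div_iff₀ (sub_pos.2 hab)]
  linarith

end Sobolev

/-! ### Partial derivatives on a strip -/

section Strip

variable {I : Set ℝ} {u : ℝ → ℝ → ℝ} {t x : ℝ}

lemma hasDerivWithinAt_left_of_uncurry {u' : ℝ × ℝ →L[ℝ] ℝ}
    (hu : HasFDerivWithinAt (uncurry u) u' (I ×ˢ univ) (t, x)) :
    HasDerivWithinAt (fun s => u s x) (u' (1, 0)) I t :=
  hu.comp_hasDerivWithinAt (f := fun s => (s, x)) t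
    ((hasDerivAt_id t).prodMk (hasDerivAt_const t x)).hasDerivWithinAt
    fun _ hs => mk_mem_prod hs (mem_univ _)

lemma hasDerivAt_right_of_uncurry {u' : ℝ × ℝ →L[ℝ] ℝ} (ht : t ∈ I)
    (hu : HasFDerivWithinAt (uncurry u) u' (I ×ˢ univ) (t, x)) :
    HasDerivAt (u t) (u' (0, 1)) x :=
  hasDerivWithinAt_univ.1 <| hu.comp_hasDerivWithinAt x
    ((hasDerivAt_const x t).prodMk (hasDerivAt_id x)).hasDerivWithinAt
    fun _ _ => mk_mem_prod ht (mem_univ _)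

lemma contDiff_right_of_uncurry {n : WithTop ℕ∞} (hu : ContDiffOn ℝ n (uncurry u) (I ×ˢ univ))
    (ht : t ∈ I) : ContDiff ℝ n (u t) :=
  hu.comp_contDiff (contDiff_prodMk_right t) fun _ => mk_mem_prod ht (mem_univ _)

lemma contDiffOn_uncurry_deriv_right {m n : WithTop ℕ∞}
    (hu : ContDiffOn ℝ n (uncurry u) (I ×ˢ univ)) (hmn : m + 1 ≤ n) :
    ContDiffOn ℝ m (uncurry fun t x => deriv (u t) x) (I ×ˢ univ) := by
  intro p hp
  have huncurry : ContDiffWithinAt ℝ n (uncurry fun (q : ℝ × ℝ) y => u q.1 y)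
      ((I ×ˢ univ) ×ˢ univ) (p, p.2) :=
    (hu (p.1, p.2) hp).comp (p, p.2)
      (contDiff_fst.fst.prodMk contDiff_snd).contDiffWithinAt
      fun q hq => mk_mem_prod hq.1.1 (mem_univ _)
  have h := huncurry.fderivWithin_apply contDiffWithinAt_snd (contDiffWithinAt_const (c := (1 : ℝ)))
    uniqueDiffOn_univ hmn hp fun _ _ => mem_univ _
  simp only [fderivWithin_univ] at h
  exact h

lemma contDiffOn_uncurry_derivWithin_left {m n : WithTop ℕ∞} (hI : UniqueDiffOn ℝ I)
    (hu : ContDiffOn ℝ n (uncurry u) (I ×ˢ univ)) (hmn : m + 1 ≤ n) :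
    ContDiffOn ℝ m (uncurry fun t x => derivWithin (fun s => u s x) I t) (I ×ˢ univ) := by
  intro p hp
  have huncurry : ContDiffWithinAt ℝ n (uncurry fun (q : ℝ × ℝ) s => u s q.2)
      ((I ×ˢ univ) ×ˢ I) (p, p.1) :=
    (hu (p.1, p.2) hp).comp (p, p.1)
      (contDiff_snd.prodMk contDiff_fst.snd).contDiffWithinAt
      fun q hq => mk_mem_prod hq.2 (mem_univ _)
  exact huncurry.fderivWithin_apply contDiffWithinAt_fst (contDiffWithinAt_const (c := (1 : ℝ)))
    hI hmn hp fun _ hq => hq.1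

lemma hasDerivWithinAt_deriv_right (hI : Convex ℝ I) (hI' : (interior I).Nonempty)
    (hu : ContDiffOn ℝ 2 (uncurry u) (I ×ˢ univ)) (ht : t ∈ I) :
    HasDerivWithinAt (fun s => deriv (u s) x)
      (deriv (fun y => derivWithin (fun s => u s y) I t) x) I t := by
  set S : Set (ℝ × ℝ) := I ×ˢ univ
  set D := fderivWithin ℝ (uncurry u) S
  have hS : UniqueDiffOn ℝ S := (uniqueDiffOn_convex hI hI').prod uniqueDiffOn_univ
  have hp : (t, x) ∈ S := ⟨ht, mem_univ x⟩
  have hD : ∀ q ∈ S, HasFDerivWithinAt (uncurry u) (D q) S q := fun q hq =>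
    (hu.differentiableOn two_ne_zero q hq).hasFDerivWithinAt
  have hD' : HasFDerivWithinAt D (fderivWithin ℝ D S (t, x)) S (t, x) :=
    ((hu.fderivWithin hS one_add_one_eq_two.le).differentiableOn one_ne_zero
      (t, x) hp).hasFDerivWithinAt
  have hD'_apply : ∀ e : ℝ × ℝ, HasFDerivWithinAt (fun q => D q e)
      ((fderivWithin ℝ D S (t, x)).flip e) S (t, x) := fun e => by
    simpa using hD'.clm_apply (hasFDerivWithinAt_const e (t, x) S)
  have deriv_right : HasFDerivWithinAt (uncurry fun s y => deriv (u s) y)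
      ((fderivWithin ℝ D S (t, x)).flip (0, 1)) S (t, x) :=
    (hD'_apply (0, 1)).congr
      (fun q hq => (hasDerivAt_right_of_uncurry hq.1 (hD q hq)).deriv)
      (hasDerivAt_right_of_uncurry ht (hD _ hp)).deriv
  have derivWithin_left : HasFDerivWithinAt (uncurry fun s y => derivWithin (fun r => u r y) I s)
      ((fderivWithin ℝ D S (t, x)).flip (1, 0)) S (t, x) :=
    (hD'_apply (1, 0)).congr
      (fun q hq => (hasDerivWithinAt_left_of_uncurry (hD q hq)).derivWithin
        (uniqueDiffOn_convex hI hI' _ hq.1))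
      ((hasDerivWithinAt_left_of_uncurry (hD _ hp)).derivWithin (uniqueDiffOn_convex hI hI' _ ht))
  have symm : IsSymmSndFDerivWithinAt ℝ (uncurry u) S (t, x) := by
    refine (hu _ hp).isSymmSndFDerivWithinAt (by simp) hS ?_ hp
    rw [(hI.prod convex_univ).closure_interior_eq_closure_of_nonempty_interior]
    · exact subset_closure hp
    · rw [interior_prod_eq, interior_univ]
      exact hI'.prod univ_nonempty
  rw [(hasDerivAt_right_of_uncurry ht derivWithin_left).deriv]
  convert hasDerivWithinAt_left_of_uncurry deriv_right using 1
  exact symm (0, 1) (1, 0)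

lemma antitoneOn_intervalIntegral_of_hasDerivWithinAt {c d : ℝ} {g g' : ℝ → ℝ → ℝ}
    (hI : I.OrdConnected) (hg : ∀ t ∈ I, IntervalIntegrable (g t) volume c d)
    (hgg' : ∀ t ∈ I, ∀ x ∈ uIcc c d, HasDerivWithinAt (fun s => g s x) (g' t x) I t)
    (hg' : ContinuousOn (uncurry g') (I ×ˢ uIcc c d))
    (hg'_nonpos : ∀ t ∈ I, ∫ x in c..d, g' t x ≤ 0) :
    AntitoneOn (fun t => ∫ x in c..d, g t x) I := by
  intro s hs t ht hst
  have hsub : Icc s t ⊆ I := hI.out hs ht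
  have ftc : ∀ x ∈ uIcc c d, g t x - g s x = ∫ r in s..t, g' r x := fun x hx => by
    refine (intervalIntegral.integral_eq_sub_of_hasDerivAt_of_le hst
      (fun r hr => ((hgg' r (hsub hr) x hx).mono hsub).continuousWithinAt)
      (fun r hr => (hgg' r (hsub (Ioo_subset_Icc_self hr)) x hx).hasDerivAt
        (Filter.mem_of_superset (Icc_mem_nhds hr.1 hr.2) hsub)) ?_).symm
    exact ContinuousOn.intervalIntegrable_of_Icc hst
      (hg'.comp (f := fun r => (r, x)) (by fun_prop) fun r hr => ⟨hsub hr, hx⟩)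
  have hg'_int : IntegrableOn (uncurry g') (uIoc s t ×ˢ uIoc c d) := by
    refine ((hg'.mono (prod_mono hsub subset_rfl)).integrableOn_compact
      (isCompact_Icc.prod isCompact_uIcc)).mono_set (prod_mono ?_ uIoc_subset_uIcc)
    exact uIcc_of_le hst ▸ uIoc_subset_uIcc
  rw [← sub_nonpos]
  calc (∫ x in c..d, g t x) - ∫ x in c..d, g s x
      = ∫ x in c..d, (g t x - g s x) := (intervalIntegral.integral_sub (hg t ht) (hg s hs)).symm
    _ = ∫ x in c..d, ∫ r in s..t, g' r x := intervalIntegral.integral_congr ftc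
    _ = ∫ r in s..t, ∫ x in c..d, g' r x :=
        (intervalIntegral_intervalIntegral_swap hg'_int).symm
    _ ≤ 0 := by
        rw [← neg_nonneg, ← intervalIntegral.integral_neg]
        exact intervalIntegral.integral_nonneg hst fun r hr =>
          neg_nonneg.2 (hg'_nonpos r (hsub hr))

end Strip

/-! ### Dissipation at a fixed time -/

section Dissipation

variable {L : ℝ} {v w q r : ℝ → ℝ}

lemma periodic_deriv (hv : Periodic v L) : Periodic (deriv v) L := fun x => by
  rw [← deriv_comp_add_const, funext hv]

lemma periodic_iteratedDeriv (hv : Periodic v L) (n : ℕ) : Periodic (iteratedDeriv n v) L := by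
  induction n with
  | zero => simpa using hv
  | succ n ih => simpa only [iteratedDeriv_succ] using periodic_deriv ih

lemma contDiff_iteratedDeriv {m n : ℕ} (hv : ContDiff ℝ (m + n : ℕ) v) :
    ContDiff ℝ m (iteratedDeriv n v) :=
  iteratedDeriv_eq_iterate (f := v) ▸ hv.iterate_deriv' m n

lemma integral_mul_deriv_eq_neg_of_periodic (hv : ContDiff ℝ 1 v) (hw : ContDiff ℝ 1 w)
    (hvL : Periodic v L) (hwL : Periodic w L) :
    ∫ x in (0 : ℝ)..L, v x * deriv w x = -∫ x in (0 : ℝ)..L, deriv v x * w x := by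
  rw [intervalIntegral.integral_mul_deriv_eq_deriv_mul
    (fun x _ => (hv.differentiable one_ne_zero x).hasDerivAt)
    (fun x _ => (hw.differentiable one_ne_zero x).hasDerivAt)
    ((hv.continuous_deriv le_rfl).intervalIntegrable _ _)
    ((hw.continuous_deriv le_rfl).intervalIntegrable _ _), hvL.eq, hwL.eq, sub_self, zero_sub]

lemma integral_nonpos_of_conservationLaw (hL : 0 ≤ L) (hw : Continuous w) (hq : ContDiff ℝ 1 q)
    (hqL : Periodic q L) (hr : ∀ x, 0 ≤ r x) (hwqr : ∀ x, w x + deriv q x + r x = 0) :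
    ∫ x in (0 : ℝ)..L, w x ≤ 0 := by
  have hq' := hq.continuous_deriv le_rfl
  calc ∫ x in (0 : ℝ)..L, w x ≤ ∫ x in (0 : ℝ)..L, -deriv q x :=
        intervalIntegral.integral_mono hL (hw.intervalIntegrable _ _)
          (hq'.neg.intervalIntegrable _ _) fun x => by linarith [hwqr x, hr x]
    _ = 0 := by
        rw [intervalIntegral.integral_neg,
          intervalIntegral.integral_deriv_of_contDiffOn_uIcc hq.contDiffOn, hqL.eq, sub_self,
          neg_zero]

lemma integral_deriv_mul_deriv_nonpos_of_conservationLaw (hL : 0 ≤ L) (hv : ContDiff ℝ 3 v)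
    (hw : ContDiff ℝ 1 w) (hq : ContDiff ℝ 1 q) (hr : ContDiff ℝ 1 r) (hvL : Periodic v L)
    (hqL : Periodic q L) (hrL : Periodic r L) (hvq : ∀ x, 0 ≤ iteratedDeriv 3 v x * q x)
    (hvr : ∀ x, 0 ≤ deriv v x * deriv r x) (hwqr : ∀ x, w x + deriv q x + r x = 0) :
    ∫ x in (0 : ℝ)..L, deriv v x * deriv w x ≤ 0 := by
  have w_eq : ∀ x, w x = -(deriv q x + r x) := fun x => by linarith [hwqr x]
  have hwL : Periodic w L := fun x => by rw [w_eq, w_eq, periodic_deriv hqL, hrL]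
  have hv1 : ContDiff ℝ 1 (deriv v) :=
    iteratedDeriv_one (f := v) ▸ contDiff_iteratedDeriv (m := 1) (hv.of_le (by norm_num))
  have hv2 : ContDiff ℝ 1 (iteratedDeriv 2 v) := contDiff_iteratedDeriv (m := 1) hv
  have deriv_v1 : deriv (deriv v) = iteratedDeriv 2 v := by simp [iteratedDeriv_succ]
  have hv2q : Continuous fun x => iteratedDeriv 2 v x * deriv q x :=
    hv2.continuous.mul (hq.continuous_deriv le_rfl)
  have hv2r : Continuous fun x => iteratedDeriv 2 v x * r x := hv2.continuous.mul hr.continuous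
  have flux_dissipation : 0 ≤ ∫ x in (0 : ℝ)..L, iteratedDeriv 3 v x * q x :=
    intervalIntegral.integral_nonneg hL fun x _ => hvq x
  have absorption_dissipation : 0 ≤ ∫ x in (0 : ℝ)..L, deriv v x * deriv r x :=
    intervalIntegral.integral_nonneg hL fun x _ => hvr x
  calc ∫ x in (0 : ℝ)..L, deriv v x * deriv w x
      = -∫ x in (0 : ℝ)..L, iteratedDeriv 2 v x * w x := by
        rw [integral_mul_deriv_eq_neg_of_periodic hv1 hw (periodic_deriv hvL) hwL, deriv_v1]
    _ = (∫ x in (0 : ℝ)..L, iteratedDeriv 2 v x * deriv q x)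
          + ∫ x in (0 : ℝ)..L, iteratedDeriv 2 v x * r x := by
        rw [← intervalIntegral.integral_add (hv2q.intervalIntegrable _ _)
          (hv2r.intervalIntegrable _ _), ← intervalIntegral.integral_neg]
        congr 1 with x
        rw [w_eq]
        ring
    _ = -(∫ x in (0 : ℝ)..L, iteratedDeriv 3 v x * q x)
          - ∫ x in (0 : ℝ)..L, deriv v x * deriv r x := by
        rw [integral_mul_deriv_eq_neg_of_periodic hv2 hq (periodic_iteratedDeriv hvL 2) hqL,
          integral_mul_deriv_eq_neg_of_periodic hv1 hr (periodic_deriv hvL) hrL, deriv_v1,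
          ← iteratedDeriv_succ, sub_neg_eq_add]
    _ ≤ 0 := by linarith

end Dissipation

/-! ### The thin-film equation -/

/-- A positive classical solution, `L`-periodic in space, of the thin-film equation
`u_t + (f(u) u_xxx)_x + g(u) = 0` on `[0,T]` with mobility `f` and absorption `g`. Only the values
`u t x` with `t ∈ [0,T]` are constrained, and `u_t` is one-sided at the endpoints. -/
structure IsThinFilmSolution (L T : ℝ) (f g : ℝ → ℝ) (u : ℝ → ℝ → ℝ) : Prop where
  contDiffOn : ContDiffOn ℝ 4 (uncurry u) (Icc 0 T ×ˢ univ)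
  periodic : ∀ t ∈ Icc 0 T, Periodic (u t) L
  pos : ∀ t ∈ Icc 0 T, ∀ x, 0 < u t x
  equation : ∀ t ∈ Icc 0 T, ∀ x, derivWithin (fun s => u s x) (Icc 0 T) t
    + deriv (fun y => f (u t y) * iteratedDeriv 3 (u t) y) x + g (u t x) = 0

namespace IsThinFilmSolution

variable {L T : ℝ} {f g : ℝ → ℝ} {u : ℝ → ℝ → ℝ} {t : ℝ}

lemma contDiff (hu : IsThinFilmSolution L T f g u) (ht : t ∈ Icc 0 T) : ContDiff ℝ 4 (u t) :=
  contDiff_right_of_uncurry hu.contDiffOn ht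

lemma contDiff_comp (hu : IsThinFilmSolution L T f g u) (ht : t ∈ Icc 0 T) {h : ℝ → ℝ}
    (hh : ContDiffOn ℝ 1 h (Ioi 0)) : ContDiff ℝ 1 fun x => h (u t x) :=
  hh.comp_contDiff ((hu.contDiff ht).of_le (by norm_num)) (hu.pos t ht)

lemma contDiff_flux (hu : IsThinFilmSolution L T f g u) (hf : ContDiffOn ℝ 1 f (Ioi 0))
    (ht : t ∈ Icc 0 T) : ContDiff ℝ 1 fun x => f (u t x) * iteratedDeriv 3 (u t) x :=
  (hu.contDiff_comp ht hf).mul (contDiff_iteratedDeriv (m := 1) (hu.contDiff ht))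

lemma periodic_flux (hu : IsThinFilmSolution L T f g u) (ht : t ∈ Icc 0 T) :
    Periodic (fun x => f (u t x) * iteratedDeriv 3 (u t) x) L :=
  ((hu.periodic t ht).comp f).mul (periodic_iteratedDeriv (hu.periodic t ht) 3)

lemma contDiffOn_derivWithin (hT : 0 < T) (hu : IsThinFilmSolution L T f g u) :
    ContDiffOn ℝ 3 (uncurry fun t x => derivWithin (fun s => u s x) (Icc 0 T) t)
      (Icc 0 T ×ˢ univ) :=
  contDiffOn_uncurry_derivWithin_left (uniqueDiffOn_Icc hT) hu.contDiffOn (by norm_num)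

lemma antitoneOn_integral (hL : 0 ≤ L) (hT : 0 < T) (hf : ContDiffOn ℝ 1 f (Ioi 0))
    (hg_nonneg : ∀ s, 0 < s → 0 ≤ g s) (hu : IsThinFilmSolution L T f g u) :
    AntitoneOn (fun t => ∫ x in (0 : ℝ)..L, u t x) (Icc 0 T) := by
  have hu_t := hu.contDiffOn_derivWithin hT
  refine antitoneOn_intervalIntegral_of_hasDerivWithinAt ordConnected_Icc
    (fun t ht => (hu.contDiff ht).continuous.intervalIntegrable _ _) (fun t ht x _ => ?_)
    (hu_t.continuousOn.mono (prod_mono subset_rfl (subset_univ _))) fun t ht => ?_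
  · exact (hasDerivWithinAt_left_of_uncurry
      (hu.contDiffOn.differentiableOn (by norm_num) (t, x)
        ⟨ht, mem_univ x⟩).hasFDerivWithinAt).differentiableWithinAt.hasDerivWithinAt
  · exact integral_nonpos_of_conservationLaw hL (contDiff_right_of_uncurry hu_t ht).continuous
      (hu.contDiff_flux hf ht) (hu.periodic_flux ht) (fun x => hg_nonneg _ (hu.pos t ht x))
      (hu.equation t ht)

lemma deriv_mul_deriv_comp_nonneg (hg : ContDiffOn ℝ 1 g (Ioi 0)) (hg_mono : MonotoneOn g (Ioi 0))
    (hu : IsThinFilmSolution L T f g u) (ht : t ∈ Icc 0 T) (x : ℝ) :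
    0 ≤ deriv (u t) x * deriv (fun y => g (u t y)) x := by
  have hux : Ioi 0 ∈ nhds (u t x) := Ioi_mem_nhds (hu.pos t ht x)
  have chain_rule : deriv (fun y => g (u t y)) x = deriv g (u t x) * deriv (u t) x :=
    deriv_comp x ((hg.contDiffAt hux).differentiableAt one_ne_zero)
      ((hu.contDiff ht).differentiable (by norm_num) x)
  have deriv_nonneg : 0 ≤ deriv g (u t x) :=
    derivWithin_of_mem_nhds (f := g) hux ▸ hg_mono.derivWithin_nonneg
  rw [chain_rule, mul_left_comm]
  exact mul_nonneg deriv_nonneg (mul_self_nonneg _)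

lemma antitoneOn_integral_deriv_sq (hL : 0 ≤ L) (hT : 0 < T) (hf : ContDiffOn ℝ 1 f (Ioi 0))
    (hf_nonneg : ∀ s, 0 < s → 0 ≤ f s) (hg : ContDiffOn ℝ 1 g (Ioi 0))
    (hg_mono : MonotoneOn g (Ioi 0)) (hu : IsThinFilmSolution L T f g u) :
    AntitoneOn (fun t => ∫ x in (0 : ℝ)..L, deriv (u t) x ^ 2) (Icc 0 T) := by
  have hu_t := hu.contDiffOn_derivWithin hT
  have hu_x : ContDiffOn ℝ 3 (uncurry fun t x => deriv (u t) x) (Icc 0 T ×ˢ univ) :=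
    contDiffOn_uncurry_deriv_right hu.contDiffOn (by norm_num)
  have hu_tx : ContDiffOn ℝ 2 (uncurry fun t => deriv fun x =>
      derivWithin (fun s => u s x) (Icc 0 T) t) (Icc 0 T ×ˢ univ) :=
    contDiffOn_uncurry_deriv_right hu_t (by norm_num)
  refine antitoneOn_intervalIntegral_of_hasDerivWithinAt ordConnected_Icc
    (g' := fun t x => 2 * (deriv (u t) x * deriv (fun y =>
      derivWithin (fun s => u s y) (Icc 0 T) t) x))
    (fun t ht => ?_) (fun t ht x _ => ?_) ?_ fun t ht => ?_
  · exact ((contDiff_right_of_uncurry hu_x ht).continuous.pow 2).intervalIntegrable _ _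
  · have h := (hasDerivWithinAt_deriv_right (x := x) (convex_Icc 0 T) (by simpa using hT)
      (hu.contDiffOn.of_le (by norm_num)) ht).fun_pow 2
    simpa [mul_assoc] using h
  · exact ((hu_x.continuousOn.mul hu_tx.continuousOn).const_mul 2).mono
      (prod_mono subset_rfl (subset_univ _))
  · have h := integral_deriv_mul_deriv_nonpos_of_conservationLaw hL
      ((hu.contDiff ht).of_le (by norm_num))
      ((contDiff_right_of_uncurry hu_t ht).of_le (by norm_num)) (hu.contDiff_flux hf ht)
      (hu.contDiff_comp ht hg) (hu.periodic t ht) (hu.periodic_flux ht)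
      ((hu.periodic t ht).comp g)
      (fun x => mul_left_comm (f (u t x)) _ _ ▸
        mul_nonneg (hf_nonneg _ (hu.pos t ht x)) (mul_self_nonneg _))
      (hu.deriv_mul_deriv_comp_nonneg hg hg_mono ht) (hu.equation t ht)
    rw [intervalIntegral.integral_const_mul]
    linarith

end IsThinFilmSolution

theorem regularized_uniform_sup_bound_general {L T : ℝ} (hL : 0 < L) (hT : 0 < T) {f g : ℝ → ℝ}
    (hf : ContDiffOn ℝ 1 f (Ioi 0)) (hf_nonneg : ∀ s, 0 < s → 0 ≤ f s)
    (hg : ContDiffOn ℝ 1 g (Ioi 0)) (hg_nonneg : ∀ s, 0 < s → 0 ≤ g s)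
    (hg_mono : MonotoneOn g (Ioi 0)) {u : ℝ → ℝ → ℝ} (hu : IsThinFilmSolution L T f g u)
    {t : ℝ} (ht : t ∈ Icc 0 T) (x : ℝ) :
    u t x ≤ (∫ y in (0 : ℝ)..L, u 0 y) / L + √(L * ∫ y in (0 : ℝ)..L, deriv (u 0) y ^ 2) := by
  have h0 : (0 : ℝ) ∈ Icc 0 T := left_mem_Icc.2 hT.le
  have mass := hu.antitoneOn_integral hL.le hT hf hg_nonneg h0 ht ht.1
  have energy := hu.antitoneOn_integral_deriv_sq hL.le hT hf hf_nonneg hg hg_mono h0 ht ht.1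
  obtain ⟨y, hy, hxy⟩ := (hu.periodic t ht).exists_mem_Ico₀ hL x
  have sobolev := le_average_add_sqrt_integral_deriv_sq hL
    ((hu.contDiff ht).of_le (by norm_num)) (Ico_subset_Icc_self hy)
  rw [sub_zero] at sobolev
  rw [hxy]
  exact sobolev.trans (by gcongr)

/-! ### Regularized solutions -/

lemma fe_nonneg {ε : ℝ} (hε : 0 ≤ ε) (s : ℝ) : 0 ≤ fe ε s := by
  unfold fe
  positivity

lemma contDiffOn_fe {ε : ℝ} (hε : 0 ≤ ε) {n : WithTop ℕ∞} : ContDiffOn ℝ n (fe ε) (Ioi 0) := by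
  refine ContDiffOn.div (by fun_prop) (by fun_prop) fun s hs => ?_
  have : 0 < s := hs
  positivity

lemma IsRegSol.isThinFilmSolution {L T lam ε : ℝ} {u : ℝ → ℝ → ℝ} (hu : IsRegSol L T lam ε u) :
    IsThinFilmSolution L T (fe ε) (fun s => s ^ lam) u where
  contDiffOn := hu.1.of_le ENat.LEInfty.out
  periodic t _ := hu.2.1 t
  pos t _ := hu.2.2.1 t
  equation := hu.2.2.2

lemma IsRegSol.le_average_add_sqrt_integral_deriv_sq {L T lam ε : ℝ} {u : ℝ → ℝ → ℝ} (hL : 0 < L)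
    (hT : 0 < T) (hlam : 0 ≤ lam) (hε : 0 ≤ ε) (hu : IsRegSol L T lam ε u) {t : ℝ}
    (ht : t ∈ Icc 0 T) (x : ℝ) :
    u t x ≤ (∫ y in (0 : ℝ)..L, u 0 y) / L + √(L * ∫ y in (0 : ℝ)..L, deriv (u 0) y ^ 2) :=
  regularized_uniform_sup_bound_general hL hT (contDiffOn_fe hε) (fun s _ => fe_nonneg hε s)
    (contDiffOn_id.rpow_const_of_ne fun _ hs => ne_of_gt hs)
    (fun _ hs => Real.rpow_nonneg hs.le lam)
    (fun _ hs _ _ hsr => Real.rpow_le_rpow (le_of_lt hs) hsr hlam) hu.isThinFilmSolution ht x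

/-- Uniform `L^∞` bound for regularized solutions in terms of the initial mass and
initial Dirichlet energy, uniformly in `T`, `λ` and `ε`. -/
theorem regularized_uniform_sup_bound
    (L m K : ℝ) (hL : 0 < L) (hm : 0 < m) (hK : 0 < K) :
    ∃ C₁ : ℝ, 0 < C₁ ∧
      ∀ T lam ε : ℝ, 0 < T → 1 ≤ lam → 0 < ε → ∀ u : ℝ → ℝ → ℝ,
        IsRegSol L T lam ε u →
        ((∫ x in (0 : ℝ)..L, u 0 x) ≤ m) →
        ((∫ x in (0 : ℝ)..L, (deriv (u 0) x) ^ 2) ≤ K ^ 2) →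
        ∀ t ∈ Set.Icc (0 : ℝ) T, ∀ x : ℝ, 0 < u t x ∧ u t x ≤ C₁ := by
  refine ⟨m / L + √(L * K ^ 2), by positivity, fun T lam ε hT hlam hε u hu hmass henergy t ht x =>
    ⟨hu.2.2.1 t x, ?_⟩⟩
  exact (hu.le_average_add_sqrt_integral_deriv_sq hL hT (zero_le_one.trans hlam) hε.le ht x).trans
    (by gcongr)

end
end

section
/- There exists a constant C > 0, independent of ε, u and v, such that for every ε ∈ (0,1] and all smooth L-periodic functions u, v, writing w = u − v: 2 ∫₀^L (A^ε w)(x) w(x) dx + 2 ∫₀^L (A^ε w)'(x) w'(x) dx + Σ_{k∈ℤ} λ_k² ∫₀^L [ ((Ψ_k w)'(x))² + ((Ψ_k w)''(x))² ] dx + Σ_{k∈ℤ} γ_k² ∫₀^L [ (Ψ_k(x)(f(u(x)) − f(v(x))))² + ((Ψ_k (f(u) − f(v)))'(x))² ] dx ≤ C (1 + ‖v‖_{2,2}²) ‖w‖_{1,2}² − 2ε ‖w‖_{2,2}². -/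
/-! By one integration by parts, pairing `A^ε w` with `w` in `H¹` is pairing it with `w - w''` in
`L²`. For a single mode `p`, the function `∂(p ∂(p w)) (w - w'') + (p w)'² + (p w)''²` is, up to
the derivative of a periodic function, a quadratic form in `(w, w')`: every term containing `w''`
cancels. Its coefficients are products `p⁽ⁱ⁾ p⁽ʲ⁾` with `i + j ≤ 4`, which the `H²` normalization
of `Ψ_k` bounds uniformly in `k`, so the estimate can be summed against `λ_k²`. In the Lipschitz
noise the only term not controlled by `|w| + |w'|` is `(f'(u) - f'(v)) v'`, at most `K |w| |v'|`;
the embedding `H¹ ⊂ L^∞`, applied to `w`, controls it. -/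

open MeasureTheory

noncomputable section

/-- The normalizing constants `c_k = sqrt(2 / (L (1 + (2πk/L)² + (2πk/L)⁴)))`. -/
def cL (L : ℝ) (k : ℤ) : ℝ :=
  Real.sqrt (2 / (L * (1 + (2 * Real.pi * (k : ℝ) / L) ^ 2
    + (2 * Real.pi * (k : ℝ) / L) ^ 4)))

/-- The trigonometric basis functions `Ψ_k` on the torus `𝕋_L`. -/
def psi (L : ℝ) (k : ℤ) : ℝ → ℝ := fun x =>
  if 0 < k then cL L k * Real.cos (2 * Real.pi * (k : ℝ) * x / L)
  else if k = 0 then cL L 0 / Real.sqrt 2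
  else cL L k * Real.sin (2 * Real.pi * (k : ℝ) * x / L)

/-- `‖u‖₂²  = ∫₀^L u²`. -/
def norm2sq (L : ℝ) (u : ℝ → ℝ) : ℝ := ∫ x in (0 : ℝ)..L, (u x) ^ 2

/-- `‖u‖_{1,2}² = ∫₀^L (u² + u'²)`. -/
def norm12sq (L : ℝ) (u : ℝ → ℝ) : ℝ :=
  ∫ x in (0 : ℝ)..L, ((u x) ^ 2 + (deriv u x) ^ 2)

/-- `‖u‖_{2,2}² = ∫₀^L (u² + u'² + u''²)`. -/
def norm22sq (L : ℝ) (u : ℝ → ℝ) : ℝ :=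
  ∫ x in (0 : ℝ)..L, ((u x) ^ 2 + (deriv u x) ^ 2 + (deriv (deriv u) x) ^ 2)

/-- The operator `A^ε u = (1/2) Σ_k λ_k² ∂_x(Ψ_k ∂_x(Ψ_k u)) + ε ∂_x² u`. -/
def Aop (L : ℝ) (lam : ℤ → ℝ) (ε : ℝ) (u : ℝ → ℝ) : ℝ → ℝ := fun x =>
  (1 / 2) * (∑' k : ℤ,
      (lam k) ^ 2 * deriv (fun y => psi L k y * deriv (fun z => psi L k z * u z) y) x)
    + ε * deriv (deriv u) x

section PeriodicFunctions

lemma periodic_deriv_s12 {𝕜 F : Type*} [NontriviallyNormedField 𝕜] [NormedAddCommGroup F]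
    [NormedSpace 𝕜 F] {f : 𝕜 → F} {c : 𝕜} (hf : Function.Periodic f c) :
    Function.Periodic (deriv f) c := fun x => by
  rw [← deriv_comp_add_const, funext hf]

lemma periodic_iterate_deriv {𝕜 F : Type*} [NontriviallyNormedField 𝕜] [NormedAddCommGroup F]
    [NormedSpace 𝕜 F] {f : 𝕜 → F} {c : 𝕜} (hf : Function.Periodic f c) (n : ℕ) :
    Function.Periodic (deriv^[n] f) c :=
  Function.Iterate.rec (Function.Periodic · c) hf (fun _ => periodic_deriv_s12) n

variable {f g : ℝ → ℝ} {L : ℝ}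

lemma continuous_iterate_deriv {N n : ℕ} (hf : ContDiff ℝ N f) (hn : n ≤ N) :
    Continuous (deriv^[n] f) := by
  simpa only [iteratedDeriv_eq_iterate] using hf.continuous_iteratedDeriv n (by exact_mod_cast hn)

lemma hasDerivAt_iterate_deriv {N n : ℕ} (hf : ContDiff ℝ N f) (hn : n < N) (x : ℝ) :
    HasDerivAt (deriv^[n] f) (deriv^[n + 1] f x) x := by
  have hd := hf.differentiable_iteratedDeriv n (by exact_mod_cast hn)
  rw [iteratedDeriv_eq_iterate] at hd
  simpa only [Function.iterate_succ_apply'] using (hd x).hasDerivAt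

lemma exists_abs_iterate_deriv_le {N : ℕ} (hL : L ≠ 0) (hf : ContDiff ℝ N f)
    (hper : Function.Periodic f L) : ∃ M, ∀ n ≤ N, ∀ x, |deriv^[n] f x| ≤ M := by
  have hbdd : ∀ n ≤ N, ∃ M, ∀ x, |deriv^[n] f x| ≤ M := fun n hn =>
    (((periodic_iterate_deriv hper n).isBounded_of_continuous hL
      (continuous_iterate_deriv hf hn)).exists_norm_le).imp fun _ hM x => hM _ ⟨x, rfl⟩
  choose! M hM using hbdd
  obtain ⟨D, hD⟩ := ((Set.finite_Iic N).image M).bddAbove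
  exact ⟨D, fun n hn x => (hM n hn x).trans (hD ⟨n, hn, rfl⟩)⟩

lemma integral_deriv_eq_zero_of_periodic (hf : ContDiff ℝ 1 f) (hper : Function.Periodic f L) :
    ∫ x in (0 : ℝ)..L, deriv f x = 0 := by
  rw [intervalIntegral.integral_deriv_of_contDiffOn_uIcc hf.contDiffOn, hper.eq, sub_self]

lemma integral_deriv_mul_of_periodic (hf : ContDiff ℝ 1 f) (hg : ContDiff ℝ 1 g)
    (hfper : Function.Periodic f L) (hgper : Function.Periodic g L) :
    ∫ x in (0 : ℝ)..L, deriv f x * g x = -∫ x in (0 : ℝ)..L, f x * deriv g x := by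
  rw [intervalIntegral.integral_mul_deriv_eq_deriv_mul
    (fun x _ => (hf.differentiable one_ne_zero x).hasDerivAt)
    (fun x _ => (hg.differentiable one_ne_zero x).hasDerivAt)
    (hf.continuous_deriv_one.intervalIntegrable _ _)
    (hg.continuous_deriv_one.intervalIntegrable _ _), hfper.eq, hgper.eq, sub_self, zero_sub,
    neg_neg]

end PeriodicFunctions

section SobolevNorms

variable {L : ℝ} {v w : ℝ → ℝ}

lemma norm12sq_nonneg (hL : 0 ≤ L) (w : ℝ → ℝ) : 0 ≤ norm12sq L w :=
  intervalIntegral.integral_nonneg hL fun x _ => by positivity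

lemma norm2sq_le_norm12sq (hL : 0 ≤ L) (hw : ContDiff ℝ 1 w) : norm2sq L w ≤ norm12sq L w := by
  refine intervalIntegral.integral_mono hL ?_ ?_ fun x => ?_
  · exact Continuous.intervalIntegrable (by fun_prop) _ _
  · exact Continuous.intervalIntegrable (by fun_prop) _ _
  · exact le_add_of_nonneg_right (sq_nonneg _)

lemma norm12sq_le_norm22sq (hL : 0 ≤ L) (hw : ContDiff ℝ 2 w) :
    norm12sq L w ≤ norm22sq L w := by
  have hw₁ := hw.continuous_deriv one_le_two
  refine intervalIntegral.integral_mono hL ?_ ?_ fun x => ?_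
  · exact Continuous.intervalIntegrable (by fun_prop) _ _
  · exact Continuous.intervalIntegrable (by fun_prop) _ _
  · exact le_add_of_nonneg_right (sq_nonneg _)

lemma abs_integral_two_mul_deriv_le {x y : ℝ} (hw : ContDiff ℝ 1 w) (hx : x ∈ Set.Icc 0 L)
    (hy : y ∈ Set.Icc 0 L) : |∫ z in y..x, 2 * w z * deriv w z| ≤ norm12sq L w := by
  have hL : 0 ≤ L := hx.1.trans hx.2
  have hE : Continuous fun z => w z ^ 2 + deriv w z ^ 2 :=
    (hw.continuous.pow 2).add (hw.continuous_deriv_one.pow 2)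
  have hsub : Set.uIoc y x ⊆ Set.uIoc 0 L :=
    Set.uIoc_subset_uIoc_of_uIcc_subset_uIcc <|
      Set.uIcc_subset_uIcc (Set.Icc_subset_uIcc hy) (Set.Icc_subset_uIcc hx)
  have hpt (z : ℝ) : ‖2 * w z * deriv w z‖ ≤ w z ^ 2 + deriv w z ^ 2 := by
    simpa [abs_mul] using two_mul_le_add_sq |w z| |deriv w z|
  calc |∫ z in y..x, 2 * w z * deriv w z|
      ≤ |∫ z in y..x, (w z ^ 2 + deriv w z ^ 2)| :=
        intervalIntegral.norm_integral_le_abs_of_norm_le (.of_forall hpt)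
          (hE.intervalIntegrable _ _)
    _ ≤ |norm12sq L w| :=
        intervalIntegral.abs_integral_mono_interval hsub
          (.of_forall fun z => by positivity) (hE.intervalIntegrable _ _)
    _ = norm12sq L w := abs_of_nonneg (norm12sq_nonneg hL w)

/- The fundamental theorem of calculus gives `w x ^ 2 ≤ w y ^ 2 + ‖w‖²_{1,2}`; average over `y`. -/
lemma sq_le_mul_norm12sq (hL : 0 < L) (hw : ContDiff ℝ 1 w) {x : ℝ} (hx : x ∈ Set.Icc 0 L) :
    w x ^ 2 ≤ (1 / L + 1) * norm12sq L w := by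
  have hpt : ∀ y ∈ Set.Icc 0 L, w x ^ 2 ≤ w y ^ 2 + norm12sq L w := fun y hy => by
    have hftc : ∫ z in y..x, 2 * w z * deriv w z = w x ^ 2 - w y ^ 2 :=
      intervalIntegral.integral_eq_sub_of_hasDerivAt (f := fun z => w z ^ 2)
        (fun z _ => by simpa using (hw.differentiable one_ne_zero z).hasDerivAt.fun_pow 2)
        (Continuous.intervalIntegrable (by fun_prop) _ _)
    linarith [(abs_le.1 (abs_integral_two_mul_deriv_le hw hx hy)).2]
  have hmean : L * w x ^ 2 ≤ norm2sq L w + L * norm12sq L w := by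
    have h := intervalIntegral.integral_mono_on (μ := volume) hL.le intervalIntegrable_const
      (Continuous.intervalIntegrable (by fun_prop) 0 L) hpt
    rwa [intervalIntegral.integral_add (Continuous.intervalIntegrable (by fun_prop) _ _)
      intervalIntegrable_const, intervalIntegral.integral_const, intervalIntegral.integral_const,
      sub_zero, smul_eq_mul, smul_eq_mul] at h
  refine le_of_mul_le_mul_left ?_ hL
  calc L * w x ^ 2 ≤ norm12sq L w + L * norm12sq L w := by
        linarith [norm2sq_le_norm12sq hL.le hw]
    _ = L * ((1 / L + 1) * norm12sq L w) := by field_simp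

lemma integral_sq_mul_sq_deriv_le (hL : 0 < L) (hw : ContDiff ℝ 1 w) (hv : ContDiff ℝ 1 v) :
    ∫ x in (0 : ℝ)..L, w x ^ 2 * deriv v x ^ 2
      ≤ (1 / L + 1) * norm12sq L w * norm12sq L v := by
  have hN := norm12sq_nonneg hL.le w
  rw [norm12sq.eq_def L v, ← intervalIntegral.integral_const_mul]
  refine intervalIntegral.integral_mono_on hL.le ?_ ?_ fun x hx => ?_
  · exact Continuous.intervalIntegrable (by fun_prop) _ _
  · exact Continuous.intervalIntegrable (by fun_prop) _ _
  · gcongr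
    · exact sq_le_mul_norm12sq hL hw hx
    · exact le_add_of_nonneg_left (sq_nonneg _)

lemma integral_deriv_deriv_mul_self_sub (hw : ContDiff ℝ 2 w) (hper : Function.Periodic w L) :
    ∫ x in (0 : ℝ)..L, deriv (deriv w) x * (w x - deriv (deriv w) x)
      = norm2sq L w - norm22sq L w := by
  have hw₁ := hw.continuous_deriv one_le_two
  have hibp : ∫ x in (0 : ℝ)..L, deriv (deriv w) x * w x = -∫ x in (0 : ℝ)..L, deriv w x ^ 2 := by
    simpa only [sq] using integral_deriv_mul_of_periodic hw.deriv' (hw.of_le one_le_two)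
      (periodic_deriv_s12 hper) hper
  unfold norm2sq norm22sq
  simp only [mul_sub, ← sq]
  rw [intervalIntegral.integral_sub, intervalIntegral.integral_add,
    intervalIntegral.integral_add, hibp]
  · ring
  all_goals exact Continuous.intervalIntegrable (by fun_prop) _ _

end SobolevNorms

/-- A coefficient of the noise: an `L`-periodic `C³` function `p` such that all products of two of
its derivatives, of total order at most four, are bounded by `B`. Only products are controlled,
because `Ψ_k'''` alone is not bounded uniformly in `k`. -/
structure IsNoiseMode (L B : ℝ) (p : ℝ → ℝ) : Prop where
  contDiff : ContDiff ℝ 3 p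
  periodic : Function.Periodic p L
  abs_mul_le : ∀ i j, i ≤ 3 ∧ j ≤ 3 ∧ i + j ≤ 4 → ∀ x, |deriv^[i] p x * deriv^[j] p x| ≤ B

namespace IsNoiseMode

variable {L B : ℝ} {p : ℝ → ℝ}

lemma nonneg (hp : IsNoiseMode L B p) : 0 ≤ B :=
  (abs_nonneg _).trans (hp.abs_mul_le 0 0 (by decide) 0)

lemma sq_le (hp : IsNoiseMode L B p) {i : ℕ} (hi : i ≤ 2) (x : ℝ) : deriv^[i] p x ^ 2 ≤ B := by
  rw [sq]
  exact (le_abs_self _).trans (hp.abs_mul_le i i (by lia) x)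

lemma abs_mul_mul_le (hp : IsNoiseMode L B p) {i j : ℕ} (hij : i ≤ 3 ∧ j ≤ 3 ∧ i + j ≤ 4) (x : ℝ)
    {t M : ℝ} (ht : |t| ≤ M) : |deriv^[i] p x * deriv^[j] p x * t| ≤ B * M :=
  (abs_mul _ t).trans_le <| mul_le_mul (hp.abs_mul_le i j hij x) ht (abs_nonneg t) hp.nonneg

end IsNoiseMode

/-- The Stratonovich correction `∂(p ∂(p w))` generated by the transport noise `∂(p w)`. -/
def stratonovichOp (p w : ℝ → ℝ) : ℝ → ℝ :=
  deriv fun y => p y * deriv (fun z => p z * w z) y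

section SingleMode

variable {L B : ℝ} {p w : ℝ → ℝ}

lemma deriv_mul_eq (hp : ContDiff ℝ 1 p) (hw : ContDiff ℝ 1 w) :
    deriv (fun y => p y * w y) = fun x => deriv p x * w x + p x * deriv w x :=
  funext fun x => deriv_fun_mul (hp.differentiable one_ne_zero x) (hw.differentiable one_ne_zero x)

lemma deriv_deriv_mul_eq (hp : ContDiff ℝ 2 p) (hw : ContDiff ℝ 2 w) :
    deriv (deriv fun y => p y * w y)
      = fun x => deriv^[2] p x * w x + 2 * (deriv p x * deriv w x) + p x * deriv^[2] w x := by
  rw [deriv_mul_eq (hp.of_le one_le_two) (hw.of_le one_le_two)]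
  funext x
  have p₀ : HasDerivAt p (deriv p x) x := hasDerivAt_iterate_deriv (n := 0) hp two_pos x
  have p₁ : HasDerivAt (deriv p) (deriv^[2] p x) x := hasDerivAt_iterate_deriv hp one_lt_two x
  have w₀ : HasDerivAt w (deriv w x) x := hasDerivAt_iterate_deriv (n := 0) hw two_pos x
  have w₁ : HasDerivAt (deriv w) (deriv^[2] w x) x := hasDerivAt_iterate_deriv hw one_lt_two x
  rw [((p₁.fun_mul w₀).fun_add (p₀.fun_mul w₁)).deriv]
  ring

lemma stratonovichOp_eq (hp : ContDiff ℝ 2 p) (hw : ContDiff ℝ 2 w) :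
    stratonovichOp p w = fun x => (deriv p x * deriv p x + p x * deriv^[2] p x) * w x
      + 3 * (p x * deriv p x) * deriv w x + p x * p x * deriv^[2] w x := by
  funext x
  have hpw : ContDiff ℝ 2 fun y => p y * w y := hp.mul hw
  have p₀ : HasDerivAt p (deriv p x) x := hasDerivAt_iterate_deriv (n := 0) hp two_pos x
  have d₁ : HasDerivAt (deriv fun y => p y * w y) (deriv (deriv fun y => p y * w y) x) x :=
    hasDerivAt_iterate_deriv (n := 1) hpw one_lt_two x
  rw [stratonovichOp, (p₀.fun_mul d₁).deriv]
  rw [deriv_deriv_mul_eq hp hw, deriv_mul_eq (hp.of_le one_le_two) (hw.of_le one_le_two)]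
  ring

lemma contDiff_stratonovichOp {n : WithTop ℕ∞} (hp : ContDiff ℝ (n + 1 + 1) p)
    (hw : ContDiff ℝ (n + 1 + 1) w) : ContDiff ℝ n (stratonovichOp p w) :=
  ((hp.of_le le_self_add).mul (hp.mul hw).deriv').deriv'

lemma periodic_stratonovichOp (hp : Function.Periodic p L) (hw : Function.Periodic w L) :
    Function.Periodic (stratonovichOp p w) L :=
  periodic_deriv_s12 (hp.mul (periodic_deriv_s12 (hp.mul hw)))

lemma deriv_stratonovichOp (hp : ContDiff ℝ 3 p) (hw : ContDiff ℝ 3 w) :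
    deriv (stratonovichOp p w) = fun x =>
      (3 * (deriv p x * deriv^[2] p x) + p x * deriv^[3] p x) * w x
        + 4 * (deriv p x * deriv p x + p x * deriv^[2] p x) * deriv w x
        + 5 * (p x * deriv p x) * deriv^[2] w x + p x * p x * deriv^[3] w x := by
  rw [stratonovichOp_eq (hp.of_le (by norm_num)) (hw.of_le (by norm_num))]
  funext x
  have p₀ : HasDerivAt p (deriv p x) x := hasDerivAt_iterate_deriv (n := 0) hp three_pos x
  have p₁ : HasDerivAt (deriv p) (deriv^[2] p x) x :=
    hasDerivAt_iterate_deriv (n := 1) hp (by decide) x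
  have p₂ := hasDerivAt_iterate_deriv (n := 2) hp (by decide) x
  have w₀ : HasDerivAt w (deriv w x) x := hasDerivAt_iterate_deriv (n := 0) hw three_pos x
  have w₁ : HasDerivAt (deriv w) (deriv^[2] w x) x :=
    hasDerivAt_iterate_deriv (n := 1) hw (by decide) x
  have w₂ := hasDerivAt_iterate_deriv (n := 2) hw (by decide) x
  rw [(((((p₁.fun_mul p₁).fun_add (p₀.fun_mul p₂)).fun_mul w₀).fun_add
    (((p₀.fun_mul p₁).const_mul 3).fun_mul w₁)).fun_add ((p₀.fun_mul p₀).fun_mul w₂)).deriv]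
  ring

lemma abs_stratonovichOp_le (hp : IsNoiseMode L B p) (hw : ContDiff ℝ 2 w) {M : ℝ} {x : ℝ}
    (hM : ∀ n ≤ 2, |deriv^[n] w x| ≤ M) : |stratonovichOp p w x| ≤ 6 * B * M := by
  have h₁ := abs_le.1 (hp.abs_mul_mul_le (i := 1) (j := 1) (by decide) x (hM 0 (by decide)))
  have h₂ := abs_le.1 (hp.abs_mul_mul_le (i := 0) (j := 2) (by decide) x (hM 0 (by decide)))
  have h₃ := abs_le.1 (hp.abs_mul_mul_le (i := 0) (j := 1) (by decide) x (hM 1 (by decide)))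
  have h₄ := abs_le.1 (hp.abs_mul_mul_le (i := 0) (j := 0) (by decide) x (hM 2 le_rfl))
  simp only [Function.iterate_zero_apply, Function.iterate_one] at h₁ h₂ h₃ h₄
  rw [stratonovichOp_eq (hp.contDiff.of_le (by norm_num)) hw]
  exact abs_le.2 ⟨by linarith, by linarith⟩

lemma abs_deriv_stratonovichOp_le (hp : IsNoiseMode L B p) (hw : ContDiff ℝ 3 w) {M : ℝ} {x : ℝ}
    (hM : ∀ n ≤ 3, |deriv^[n] w x| ≤ M) : |deriv (stratonovichOp p w) x| ≤ 18 * B * M := by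
  have h₁ := abs_le.1 (hp.abs_mul_mul_le (i := 1) (j := 2) (by decide) x (hM 0 (by decide)))
  have h₂ := abs_le.1 (hp.abs_mul_mul_le (i := 0) (j := 3) (by decide) x (hM 0 (by decide)))
  have h₃ := abs_le.1 (hp.abs_mul_mul_le (i := 1) (j := 1) (by decide) x (hM 1 (by decide)))
  have h₄ := abs_le.1 (hp.abs_mul_mul_le (i := 0) (j := 2) (by decide) x (hM 1 (by decide)))
  have h₅ := abs_le.1 (hp.abs_mul_mul_le (i := 0) (j := 1) (by decide) x (hM 2 (by decide)))
  have h₆ := abs_le.1 (hp.abs_mul_mul_le (i := 0) (j := 0) (by decide) x (hM 3 le_rfl))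
  simp only [Function.iterate_zero_apply, Function.iterate_one] at h₁ h₂ h₃ h₄ h₅ h₆
  rw [deriv_stratonovichOp hp.contDiff hw]
  exact abs_le.2 ⟨by linarith, by linarith⟩

lemma exists_abs_iterate_deriv_stratonovichOp_le (hL : L ≠ 0) (hw : ContDiff ℝ 3 w)
    (hper : Function.Periodic w L) :
    ∃ M, ∀ B p, IsNoiseMode L B p → ∀ n ≤ 1, ∀ x,
      |deriv^[n] (stratonovichOp p w) x| ≤ B * M := by
  obtain ⟨M, hM⟩ := exists_abs_iterate_deriv_le (N := 3) hL hw hper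
  refine ⟨18 * M, fun B p hp n hn x => ?_⟩
  have hBM : 0 ≤ B * M := mul_nonneg hp.nonneg ((abs_nonneg _).trans (hM 0 (by decide) 0))
  obtain rfl | rfl := Nat.le_one_iff_eq_zero_or_eq_one.1 hn
  · rw [Function.iterate_zero_apply]
    linarith [abs_stratonovichOp_le (x := x) hp (hw.of_le (by norm_num))
      fun n hn => hM n (by lia) x]
  · rw [Function.iterate_one]
    linarith [abs_deriv_stratonovichOp_le (x := x) hp hw fun n hn => hM n hn x]

/-- What remains of `∂(p ∂(p w)) (w - w'') + (p w)'² + (p w)''²` after integrating by parts: no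
`w''` occurs, and the coefficients are products of derivatives of `p`. -/
def energyRemainder (p w : ℝ → ℝ) (x : ℝ) : ℝ :=
  (deriv p x * deriv p x + deriv^[2] p x * deriv^[2] p x) * w x ^ 2
    + (p x * deriv p x + 5 * (deriv p x * deriv^[2] p x) - p x * deriv^[3] p x)
      * (w x * deriv w x)
    + (9 / 2 * (deriv p x * deriv p x) - 3 / 2 * (p x * deriv^[2] p x)) * deriv w x ^ 2

/-- The boundary terms of the integrations by parts that lead to `energyRemainder`. -/
def energyFlux (p w : ℝ → ℝ) (x : ℝ) : ℝ :=
  p x * (deriv p x * w x + p x * deriv w x) * w x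
    + (p x * deriv^[2] p x - deriv p x * deriv p x) * (w x * deriv w x)
    + 1 / 2 * (p x * deriv p x) * (deriv w x * deriv w x)

lemma contDiff_energyFlux (hp : ContDiff ℝ 3 p) (hw : ContDiff ℝ 2 w) :
    ContDiff ℝ 1 (energyFlux p w) := by
  have p₀ : ContDiff ℝ 1 p := hp.of_le (by norm_num)
  have p₁ : ContDiff ℝ 1 (deriv p) := (hp.of_le (by norm_num)).deriv'
  have w₀ : ContDiff ℝ 1 w := hw.of_le one_le_two
  unfold energyFlux
  fun_prop

lemma continuous_energyRemainder (hp : ContDiff ℝ 3 p) (hw : ContDiff ℝ 1 w) :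
    Continuous (energyRemainder p w) := by
  have p₁ := hp.continuous_deriv (by norm_num)
  have p₂ : Continuous (deriv^[2] p) := continuous_iterate_deriv hp (by decide)
  have p₃ : Continuous (deriv^[3] p) := continuous_iterate_deriv hp le_rfl
  unfold energyRemainder
  fun_prop

lemma periodic_energyFlux (hp : Function.Periodic p L) (hw : Function.Periodic w L) :
    Function.Periodic (energyFlux p w) L := fun x => by
  simp only [energyFlux, hp x, hw x, periodic_deriv_s12 hp x, periodic_deriv_s12 hw x,
    periodic_iterate_deriv hp 2 x]

lemma stratonovichOp_mul_add_eq (hp : ContDiff ℝ 3 p) (hw : ContDiff ℝ 2 w) (x : ℝ) :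
    stratonovichOp p w x * (w x - deriv (deriv w) x)
        + (deriv (fun y => p y * w y) x ^ 2 + deriv (deriv fun y => p y * w y) x ^ 2)
      = energyRemainder p w x + deriv (energyFlux p w) x := by
  have p₀ : HasDerivAt p (deriv p x) x := hasDerivAt_iterate_deriv (n := 0) hp three_pos x
  have p₁ : HasDerivAt (deriv p) (deriv^[2] p x) x :=
    hasDerivAt_iterate_deriv (n := 1) hp (by decide) x
  have p₂ := hasDerivAt_iterate_deriv (n := 2) hp (by decide) x
  have w₀ : HasDerivAt w (deriv w x) x := hasDerivAt_iterate_deriv (n := 0) hw two_pos x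
  have w₁ : HasDerivAt (deriv w) (deriv^[2] w x) x := hasDerivAt_iterate_deriv hw one_lt_two x
  have hflux := ((((p₀.fun_mul ((p₁.fun_mul w₀).fun_add (p₀.fun_mul w₁))).fun_mul w₀).fun_add
    (((p₀.fun_mul p₂).fun_sub (p₁.fun_mul p₁)).fun_mul (w₀.fun_mul w₁))).fun_add
    (((p₀.fun_mul p₁).const_mul (1 / 2)).fun_mul (w₁.fun_mul w₁))).deriv
  have hp2 : ContDiff ℝ 2 p := hp.of_le (by norm_num)
  rw [stratonovichOp_eq hp2 hw, deriv_deriv_mul_eq hp2 hw,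
    deriv_mul_eq (hp.of_le (by norm_num)) (hw.of_le one_le_two)]
  unfold energyFlux energyRemainder
  rw [hflux]
  simp only [Function.iterate_succ, Function.iterate_zero, Function.comp_apply, id_eq]
  ring

lemma energyRemainder_le (hp : IsNoiseMode L B p) (w : ℝ → ℝ) (x : ℝ) :
    energyRemainder p w x ≤ 10 * B * (w x ^ 2 + deriv w x ^ 2) := by
  have hmul : |w x * deriv w x| ≤ (w x ^ 2 + deriv w x ^ 2) / 2 := by
    rw [abs_mul, ← sq_abs (w x), ← sq_abs (deriv w x)]
    linarith [two_mul_le_add_sq |w x| |deriv w x|]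
  have h₁ := abs_le.1 (hp.abs_mul_mul_le (i := 1) (j := 1) (by decide) x (abs_sq (w x)).le)
  have h₂ := abs_le.1 (hp.abs_mul_mul_le (i := 2) (j := 2) (by decide) x (abs_sq (w x)).le)
  have h₃ := abs_le.1 (hp.abs_mul_mul_le (i := 0) (j := 1) (by decide) x hmul)
  have h₄ := abs_le.1 (hp.abs_mul_mul_le (i := 1) (j := 2) (by decide) x hmul)
  have h₅ := abs_le.1 (hp.abs_mul_mul_le (i := 0) (j := 3) (by decide) x hmul)
  have h₆ := abs_le.1 (hp.abs_mul_mul_le (i := 1) (j := 1) (by decide) x (abs_sq (deriv w x)).le)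
  have h₇ := abs_le.1 (hp.abs_mul_mul_le (i := 0) (j := 2) (by decide) x (abs_sq (deriv w x)).le)
  simp only [Function.iterate_zero_apply, Function.iterate_one] at h₁ h₂ h₃ h₄ h₅ h₆ h₇
  unfold energyRemainder
  linarith

theorem integral_stratonovichOp_mul_add_norm12sq_le (hL : 0 ≤ L) (hp : IsNoiseMode L B p)
    (hw : ContDiff ℝ 2 w) (hper : Function.Periodic w L) :
    (∫ x in (0 : ℝ)..L, stratonovichOp p w x * (w x - deriv (deriv w) x))
        + norm12sq L (deriv fun y => p y * w y)
      ≤ 10 * B * norm12sq L w := by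
  have hflux := contDiff_energyFlux hp.contDiff hw
  have hR := continuous_energyRemainder hp.contDiff (hw.of_le one_le_two)
  have hw₁ := hw.continuous_deriv one_le_two
  have hp₂ : ContDiff ℝ 2 p := hp.contDiff.of_le (by norm_num)
  have hpw : ContDiff ℝ 2 fun y => p y * w y := hp₂.mul hw
  have hpw₁ := hpw.continuous_deriv one_le_two
  have hS := (contDiff_stratonovichOp (n := 0) hp₂ hw).continuous
  calc _ = ∫ x in (0 : ℝ)..L, (energyRemainder p w x + deriv (energyFlux p w) x) := by
        simp only [← stratonovichOp_mul_add_eq hp.contDiff hw]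
        exact (intervalIntegral.integral_add
          (Continuous.intervalIntegrable (by fun_prop) _ _)
          (Continuous.intervalIntegrable (by fun_prop) _ _)).symm
    _ = ∫ x in (0 : ℝ)..L, energyRemainder p w x := by
        rw [intervalIntegral.integral_add (hR.intervalIntegrable _ _)
          (hflux.continuous_deriv_one.intervalIntegrable _ _),
          integral_deriv_eq_zero_of_periodic hflux (periodic_energyFlux hp.periodic hper), add_zero]
    _ ≤ ∫ x in (0 : ℝ)..L, 10 * B * (w x ^ 2 + deriv w x ^ 2) :=
        intervalIntegral.integral_mono hL (hR.intervalIntegrable _ _)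
          (Continuous.intervalIntegrable (by fun_prop) _ _) (energyRemainder_le hp w)
    _ = 10 * B * norm12sq L w := intervalIntegral.integral_const_mul _ _

end SingleMode

/-- The sum `Σ_k λ_k² ∂(Ψ_k ∂(Ψ_k u))` of the Stratonovich corrections of a family of modes. -/
def stratonovichSum {ι : Type*} (Ψ : ι → ℝ → ℝ) (lam : ι → ℝ) (u : ℝ → ℝ) (x : ℝ) : ℝ :=
  ∑' k, lam k ^ 2 * stratonovichOp (Ψ k) u x

/-- The drift `½ Σ_k λ_k² ∂(Ψ_k ∂(Ψ_k u)) + ε ∂²u`; it is `Aop L` when `Ψ = psi L`. -/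
def transportDrift {ι : Type*} (Ψ : ι → ℝ → ℝ) (lam : ι → ℝ) (ε : ℝ) (u : ℝ → ℝ) (x : ℝ) : ℝ :=
  1 / 2 * stratonovichSum Ψ lam u x + ε * deriv (deriv u) x

section TransportDrift

variable {ι : Type*} {L ε : ℝ} {B lam : ι → ℝ} {Ψ : ι → ℝ → ℝ} {w : ℝ → ℝ}

lemma contDiff_stratonovichSum (hL : L ≠ 0) (hΨ : ∀ k, IsNoiseMode L (B k) (Ψ k))
    (hlam : Summable fun k => lam k ^ 2 * B k) (hw : ContDiff ℝ 3 w)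
    (hper : Function.Periodic w L) : ContDiff ℝ 1 (stratonovichSum Ψ lam w) := by
  obtain ⟨M, hM⟩ := exists_abs_iterate_deriv_stratonovichOp_le hL hw hper
  refine contDiff_tsum (N := 1) (v := fun _ k => lam k ^ 2 * B k * M)
    (fun k => contDiff_const.mul (contDiff_stratonovichOp (n := 1) (hΨ k).contDiff hw))
    (fun _ _ => hlam.mul_right M) fun n k x hn => ?_
  rw [norm_iteratedFDeriv_eq_norm_iteratedDeriv, iteratedDeriv_const_mul_field,
    iteratedDeriv_eq_iterate, norm_mul, Real.norm_of_nonneg (sq_nonneg _), mul_assoc]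
  gcongr
  exact hM _ _ (hΨ k) n (by exact_mod_cast hn) x

lemma hasSum_integral_stratonovichOp_mul [Countable ι] (hL : L ≠ 0)
    (hΨ : ∀ k, IsNoiseMode L (B k) (Ψ k)) (hlam : Summable fun k => lam k ^ 2 * B k)
    (hw : ContDiff ℝ 3 w) (hper : Function.Periodic w L) {g : ℝ → ℝ} (hg : Continuous g) :
    HasSum (fun k => lam k ^ 2 * ∫ x in (0 : ℝ)..L, stratonovichOp (Ψ k) w x * g x)
      (∫ x in (0 : ℝ)..L, stratonovichSum Ψ lam w x * g x) := by
  obtain ⟨M, hM⟩ := exists_abs_iterate_deriv_stratonovichOp_le hL hw hper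
  have hbound (k : ι) (x : ℝ) : ‖lam k ^ 2 * stratonovichOp (Ψ k) w x‖ ≤ lam k ^ 2 * B k * M := by
    rw [norm_mul, Real.norm_of_nonneg (sq_nonneg _), mul_assoc]
    gcongr
    exact hM _ _ (hΨ k) 0 zero_le_one x
  have hcont (k : ι) : Continuous fun x => lam k ^ 2 * stratonovichOp (Ψ k) w x * g x :=
    ((contDiff_stratonovichOp (n := 1) (hΨ k).contDiff hw).continuous.const_mul _).mul hg
  simp only [← intervalIntegral.integral_const_mul, ← mul_assoc]
  refine intervalIntegral.hasSum_integral_of_dominated_convergence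
    (fun k x => lam k ^ 2 * B k * M * |g x|) (fun k => (hcont k).aestronglyMeasurable)
    (fun k => .of_forall fun x _ => norm_mul_le_of_le (hbound k x) le_rfl)
    (.of_forall fun x _ => (hlam.mul_right M).mul_right _) ?_ (.of_forall fun x _ => ?_)
  · simp only [tsum_mul_right]
    exact (hg.abs.const_mul _).intervalIntegrable _ _
  · exact ((hlam.mul_right M).of_norm_bounded (hbound · x)).hasSum.mul_right _

lemma summable_mul_norm12sq_deriv_mul [Countable ι] (hL : 0 < L)
    (hΨ : ∀ k, IsNoiseMode L (B k) (Ψ k)) (hlam : Summable fun k => lam k ^ 2 * B k)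
    (hw : ContDiff ℝ 3 w) (hper : Function.Periodic w L) :
    Summable fun k => lam k ^ 2 * norm12sq L (deriv fun y => Ψ k y * w y) := by
  have hg : Continuous fun x => w x - deriv (deriv w) x :=
    hw.continuous.sub (continuous_iterate_deriv (N := 3) (n := 2) hw (by decide))
  have hS := (hasSum_integral_stratonovichOp_mul hL.ne' hΨ hlam hw hper hg).summable
  refine Summable.of_nonneg_of_le
    (fun k => mul_nonneg (sq_nonneg _) (norm12sq_nonneg hL.le _)) (fun k => ?_)
    ((hlam.mul_right (10 * norm12sq L w)).sub hS)
  have h := integral_stratonovichOp_mul_add_norm12sq_le hL.le (hΨ k) (hw.of_le (by norm_num)) hper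
  rw [le_sub_iff_add_le', ← mul_add]
  exact (mul_le_mul_of_nonneg_left h (sq_nonneg (lam k))).trans_eq (by ring)

theorem integral_stratonovichSum_mul_add_tsum_le [Countable ι] (hL : 0 < L)
    (hΨ : ∀ k, IsNoiseMode L (B k) (Ψ k)) (hlam : Summable fun k => lam k ^ 2 * B k)
    (hw : ContDiff ℝ 3 w) (hper : Function.Periodic w L) :
    (∫ x in (0 : ℝ)..L, stratonovichSum Ψ lam w x * (w x - deriv (deriv w) x))
        + ∑' k, lam k ^ 2 * norm12sq L (deriv fun y => Ψ k y * w y)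
      ≤ 10 * (∑' k, lam k ^ 2 * B k) * norm12sq L w := by
  have hg : Continuous fun x => w x - deriv (deriv w) x :=
    hw.continuous.sub (continuous_iterate_deriv (N := 3) (n := 2) hw (by decide))
  have hS := hasSum_integral_stratonovichOp_mul hL.ne' hΨ hlam hw hper hg
  have hN := (summable_mul_norm12sq_deriv_mul hL hΨ hlam hw hper).hasSum
  have hB := (hlam.hasSum.mul_left 10).mul_right (norm12sq L w)
  refine hasSum_le (fun k => ?_) (hS.add hN) hB
  have h := integral_stratonovichOp_mul_add_norm12sq_le hL.le (hΨ k) (hw.of_le (by norm_num)) hper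
  rw [← mul_add]
  exact (mul_le_mul_of_nonneg_left h (sq_nonneg (lam k))).trans_eq (by ring)

lemma contDiff_transportDrift (hL : L ≠ 0) (hΨ : ∀ k, IsNoiseMode L (B k) (Ψ k))
    (hlam : Summable fun k => lam k ^ 2 * B k) (hw : ContDiff ℝ 3 w)
    (hper : Function.Periodic w L) : ContDiff ℝ 1 (transportDrift Ψ lam ε w) :=
  have hw₂ : ContDiff ℝ 1 (deriv (deriv w)) := hw.iterate_deriv' 1 2
  (contDiff_const.mul (contDiff_stratonovichSum hL hΨ hlam hw hper)).add (contDiff_const.mul hw₂)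

lemma periodic_transportDrift (hΨ : ∀ k, Function.Periodic (Ψ k) L)
    (hper : Function.Periodic w L) : Function.Periodic (transportDrift Ψ lam ε w) L := fun x => by
  simp only [transportDrift, stratonovichSum, periodic_stratonovichOp (hΨ _) hper x,
    periodic_deriv_s12 (periodic_deriv_s12 hper) x]

lemma integral_transportDrift_mul_add (hL : L ≠ 0) (hΨ : ∀ k, IsNoiseMode L (B k) (Ψ k))
    (hlam : Summable fun k => lam k ^ 2 * B k) (hw : ContDiff ℝ 3 w)
    (hper : Function.Periodic w L) :
    2 * (∫ x in (0 : ℝ)..L, transportDrift Ψ lam ε w x * w x)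
        + 2 * (∫ x in (0 : ℝ)..L, deriv (transportDrift Ψ lam ε w) x * deriv w x)
      = (∫ x in (0 : ℝ)..L, stratonovichSum Ψ lam w x * (w x - deriv (deriv w) x))
        + 2 * ε * (norm2sq L w - norm22sq L w) := by
  have hA : ContDiff ℝ 1 (transportDrift Ψ lam ε w) := contDiff_transportDrift hL hΨ hlam hw hper
  have hw₁ : ContDiff ℝ 1 (deriv w) := (hw.of_le (by norm_num)).deriv'
  rw [integral_deriv_mul_of_periodic hA hw₁
    (periodic_transportDrift (fun k => (hΨ k).periodic) hper) (periodic_deriv_s12 hper),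
    ← integral_deriv_deriv_mul_self_sub (hw.of_le (by norm_num)) hper]
  have hA₀ := hA.continuous
  have hS₀ := (contDiff_stratonovichSum hL hΨ hlam hw hper).continuous
  simp only [mul_neg, ← sub_eq_add_neg, ← intervalIntegral.integral_const_mul]
  rw [← intervalIntegral.integral_sub, ← intervalIntegral.integral_add]
  · congr with x
    unfold transportDrift
    ring
  all_goals exact Continuous.intervalIntegrable (by fun_prop) _ _

theorem transportDrift_energy_le [Countable ι] (hL : 0 < L) (hε : ε ≤ 1)
    (hΨ : ∀ k, IsNoiseMode L (B k) (Ψ k)) (hlam : Summable fun k => lam k ^ 2 * B k)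
    (hw : ContDiff ℝ 3 w) (hper : Function.Periodic w L) :
    2 * (∫ x in (0 : ℝ)..L, transportDrift Ψ lam ε w x * w x)
        + 2 * (∫ x in (0 : ℝ)..L, deriv (transportDrift Ψ lam ε w) x * deriv w x)
        + ∑' k, lam k ^ 2 * norm12sq L (deriv fun y => Ψ k y * w y)
      ≤ (10 * (∑' k, lam k ^ 2 * B k) + 2) * norm12sq L w - 2 * ε * norm22sq L w := by
  have hε₂ : ε * norm2sq L w ≤ norm12sq L w :=
    calc ε * norm2sq L w ≤ 1 * norm2sq L w :=
          mul_le_mul_of_nonneg_right hε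
            (intervalIntegral.integral_nonneg hL.le fun x _ => sq_nonneg (w x))
      _ ≤ norm12sq L w := by
          rw [one_mul]
          exact norm2sq_le_norm12sq hL.le (hw.of_le (by norm_num))
  rw [integral_transportDrift_mul_add hL.ne' hΨ hlam hw hper]
  linarith [integral_stratonovichSum_mul_add_tsum_le hL hΨ hlam hw hper]

end TransportDrift

section LipschitzNoise

lemma IsNoiseMode.norm12sq_mul_le {L B : ℝ} {p g : ℝ → ℝ} (hL : 0 ≤ L) (hp : IsNoiseMode L B p)
    (hg : ContDiff ℝ 1 g) : norm12sq L (fun y => p y * g y) ≤ 3 * B * norm12sq L g := by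
  have hp₁ : ContDiff ℝ 1 p := hp.contDiff.of_le (by norm_num)
  rw [norm12sq, norm12sq, ← intervalIntegral.integral_const_mul]
  refine intervalIntegral.integral_mono hL ?_ ?_ fun x => ?_
  · exact Continuous.intervalIntegrable (by fun_prop) _ _
  · exact Continuous.intervalIntegrable (by fun_prop) _ _
  have hp₀ : p x ^ 2 ≤ B := hp.sq_le (i := 0) (by decide) x
  have hp₁' : deriv p x ^ 2 ≤ B := hp.sq_le (i := 1) (by decide) x
  calc (p x * g x) ^ 2 + deriv (fun y => p y * g y) x ^ 2
      = p x ^ 2 * g x ^ 2 + (deriv p x * g x + p x * deriv g x) ^ 2 := by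
        rw [deriv_mul_eq hp₁ hg, mul_pow]
    _ ≤ p x ^ 2 * g x ^ 2 + 2 * ((deriv p x * g x) ^ 2 + (p x * deriv g x) ^ 2) := by
        gcongr
        exact add_sq_le
    _ = p x ^ 2 * g x ^ 2 + 2 * (deriv p x ^ 2 * g x ^ 2 + p x ^ 2 * deriv g x ^ 2) := by
        simp only [mul_pow]
    _ ≤ B * g x ^ 2 + 2 * (B * g x ^ 2 + B * deriv g x ^ 2) := by gcongr
    _ ≤ 3 * B * (g x ^ 2 + deriv g x ^ 2) := by
        linarith [mul_nonneg hp.nonneg (sq_nonneg (deriv g x))]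

lemma tsum_mul_norm12sq_mul_le {ι : Type*} {L : ℝ} {B gam : ι → ℝ} {Ψ : ι → ℝ → ℝ} {g : ℝ → ℝ}
    (hL : 0 ≤ L) (hΨ : ∀ k, IsNoiseMode L (B k) (Ψ k))
    (hgam : Summable fun k => gam k ^ 2 * B k) (hg : ContDiff ℝ 1 g) :
    ∑' k, gam k ^ 2 * norm12sq L (fun y => Ψ k y * g y)
      ≤ 3 * (∑' k, gam k ^ 2 * B k) * norm12sq L g := by
  have hmode (k : ι) : gam k ^ 2 * norm12sq L (fun y => Ψ k y * g y)
      ≤ 3 * (gam k ^ 2 * B k) * norm12sq L g :=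
    (mul_le_mul_of_nonneg_left ((hΨ k).norm12sq_mul_le hL hg) (sq_nonneg _)).trans_eq (by ring)
  have hsum := (hgam.mul_left 3).mul_right (norm12sq L g)
  rw [← tsum_mul_left, ← tsum_mul_right]
  exact (hsum.of_nonneg_of_le
    (fun k => mul_nonneg (sq_nonneg _) (norm12sq_nonneg hL _)) hmode).tsum_le_tsum hmode hsum

variable {f u v : ℝ → ℝ} {K : ℝ}

lemma abs_sub_le_of_abs_deriv_le (hf : Differentiable ℝ f) (hfb : ∀ s, |deriv f s| ≤ K) (s t : ℝ) :
    |f s - f t| ≤ K * |s - t| :=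
  convex_univ.norm_image_sub_le_of_norm_deriv_le (fun x _ => hf x) (fun x _ => hfb x)
    (Set.mem_univ t) (Set.mem_univ s)

lemma sq_le_sq_mul_sq_of_abs_le {a b : ℝ} (h : |a| ≤ K * |b|) : a ^ 2 ≤ K ^ 2 * b ^ 2 := by
  rw [← mul_pow, sq_le_sq, abs_mul]
  exact h.trans (mul_le_mul_of_nonneg_right (le_abs_self K) (abs_nonneg b))

lemma sq_deriv_comp_sub_comp_le (hf : Differentiable ℝ f) (hfb : ∀ s, |deriv f s| ≤ K)
    (hflip : ∀ s t, |deriv f s - deriv f t| ≤ K * |s - t|) {x : ℝ}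
    (hu : DifferentiableAt ℝ u x) (hv : DifferentiableAt ℝ v x) :
    deriv (fun y => f (u y) - f (v y)) x ^ 2
      ≤ 2 * K ^ 2 * (deriv (fun y => u y - v y) x ^ 2 + (u x - v x) ^ 2 * deriv v x ^ 2) := by
  have hsplit : deriv (fun y => f (u y) - f (v y)) x
      = deriv f (u x) * deriv (fun y => u y - v y) x
        + (deriv f (u x) - deriv f (v x)) * deriv v x := by
    have hfu : HasDerivAt (fun y => f (u y)) _ x := (hf (u x)).hasDerivAt.comp x hu.hasDerivAt
    have hfv : HasDerivAt (fun y => f (v y)) _ x := (hf (v x)).hasDerivAt.comp x hv.hasDerivAt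
    rw [deriv_fun_sub hu hv, (hfu.fun_sub hfv).deriv]
    ring
  have hf' : deriv f (u x) ^ 2 ≤ K ^ 2 := sq_le_sq.2 ((hfb _).trans (le_abs_self K))
  have hlip := sq_le_sq_mul_sq_of_abs_le (hflip (u x) (v x))
  rw [hsplit]
  refine add_sq_le.trans ?_
  simp only [mul_pow]
  calc _ ≤ 2 * (K ^ 2 * deriv (fun y => u y - v y) x ^ 2
        + K ^ 2 * (u x - v x) ^ 2 * deriv v x ^ 2) := by gcongr
    _ = _ := by ring

lemma norm12sq_comp_sub_comp_le {L : ℝ} (hL : 0 < L) (hf : ContDiff ℝ 1 f)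
    (hfb : ∀ s, |deriv f s| ≤ K) (hflip : ∀ s t, |deriv f s - deriv f t| ≤ K * |s - t|)
    (hu : ContDiff ℝ 1 u) (hv : ContDiff ℝ 1 v) :
    norm12sq L (fun y => f (u y) - f (v y))
      ≤ 2 * K ^ 2 * (1 / L + 1) * (1 + norm12sq L v) * norm12sq L fun y => u y - v y := by
  have hw : ContDiff ℝ 1 fun y => u y - v y := hu.sub hv
  have hf' := hf.differentiable one_ne_zero
  have hpt (x : ℝ) : (f (u x) - f (v x)) ^ 2 + deriv (fun y => f (u y) - f (v y)) x ^ 2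
      ≤ 2 * K ^ 2 * ((u x - v x) ^ 2 + deriv (fun y => u y - v y) x ^ 2
        + (u x - v x) ^ 2 * deriv v x ^ 2) := by
    have hsq := sq_le_sq_mul_sq_of_abs_le (abs_sub_le_of_abs_deriv_le hf' hfb (u x) (v x))
    linarith [sq_deriv_comp_sub_comp_le hf' hfb hflip (hu.differentiable one_ne_zero x)
      (hv.differentiable one_ne_zero x), mul_nonneg (sq_nonneg K) (sq_nonneg (u x - v x))]
  calc _ ≤ ∫ x in (0 : ℝ)..L, 2 * K ^ 2 * ((u x - v x) ^ 2 + deriv (fun y => u y - v y) x ^ 2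
        + (u x - v x) ^ 2 * deriv v x ^ 2) :=
        intervalIntegral.integral_mono hL.le (Continuous.intervalIntegrable (by fun_prop) _ _)
          (Continuous.intervalIntegrable (by fun_prop) _ _) hpt
    _ = 2 * K ^ 2 * ((norm12sq L fun y => u y - v y)
        + ∫ x in (0 : ℝ)..L, (u x - v x) ^ 2 * deriv v x ^ 2) := by
        rw [intervalIntegral.integral_const_mul, intervalIntegral.integral_add]
        · rfl
        all_goals exact Continuous.intervalIntegrable (by fun_prop) _ _
    _ ≤ 2 * K ^ 2 * ((1 / L + 1) * (norm12sq L fun y => u y - v y)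
        + (1 / L + 1) * (norm12sq L fun y => u y - v y) * norm12sq L v) := by
        gcongr
        · exact le_mul_of_one_le_left (norm12sq_nonneg hL.le _) (by simpa using hL.le)
        · exact integral_sq_mul_sq_deriv_le hL hw hv
    _ = _ := by ring

end LipschitzNoise

section TrigonometricBasis

lemma iterate_deriv_const_mul_cos (a ω φ : ℝ) (n : ℕ) :
    deriv^[n] (fun x => a * Real.cos (ω * x + φ))
      = fun x => a * ω ^ n * Real.cos (ω * x + φ + n * (Real.pi / 2)) := by
  induction n with
  | zero => simp
  | succ n ih =>
    rw [Function.iterate_succ_apply', ih]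
    funext x
    have harg : HasDerivAt (fun y => ω * y + φ + n * (Real.pi / 2)) ω x := by
      simpa using (((hasDerivAt_id x).const_mul ω).add_const φ).add_const (n * (Real.pi / 2))
    rw [(harg.cos.const_mul _).deriv, Nat.cast_succ, add_one_mul, ← add_assoc,
      Real.cos_add_pi_div_two]
    ring

variable {L : ℝ}

lemma exists_psi_eq_const_mul_cos (L : ℝ) (k : ℤ) :
    ∃ a φ, |a| ≤ cL L k ∧ psi L k = fun x => a * Real.cos (2 * Real.pi * k / L * x + φ) := by
  have hc (j : ℤ) : 0 ≤ cL L j := Real.sqrt_nonneg _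
  obtain hk | rfl | hk := lt_trichotomy 0 k
  · refine ⟨cL L k, 0, (abs_of_nonneg (hc k)).le, funext fun x => ?_⟩
    simp only [psi, if_pos hk, add_zero, div_mul_eq_mul_div]
  · refine ⟨cL L 0 / Real.sqrt 2, 0, ?_, funext fun x => by simp [psi]⟩
    rw [abs_of_nonneg (div_nonneg (hc 0) (Real.sqrt_nonneg 2))]
    exact div_le_self (hc 0) (Real.one_le_sqrt.2 one_le_two)
  · refine ⟨cL L k, -(Real.pi / 2), (abs_of_nonneg (hc k)).le, funext fun x => ?_⟩
    simp only [psi, if_neg hk.not_gt, if_neg hk.ne, ← sub_eq_add_neg, Real.cos_sub_pi_div_two,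
      div_mul_eq_mul_div]

lemma abs_iterate_deriv_psi_le (L : ℝ) (k : ℤ) (n : ℕ) (x : ℝ) :
    |deriv^[n] (psi L k) x| ≤ cL L k * |2 * Real.pi * k / L| ^ n := by
  obtain ⟨a, φ, ha, hpsi⟩ := exists_psi_eq_const_mul_cos L k
  rw [hpsi, iterate_deriv_const_mul_cos, abs_mul, abs_mul, abs_pow]
  exact (mul_le_of_le_one_right (by positivity) (Real.abs_cos_le_one _)).trans (by gcongr)

lemma pow_le_one_add_sq_add_pow_four {q : ℝ} (hq : 0 ≤ q) {n : ℕ} (hn : n ≤ 4) :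
    q ^ n ≤ 1 + q ^ 2 + q ^ 4 := by
  obtain h | h := le_total q 1
  · linarith [pow_le_one₀ hq h (n := n), sq_nonneg q, pow_nonneg hq 4]
  · linarith [pow_le_pow_right₀ h hn, sq_nonneg q]

lemma cL_sq_mul (hL : 0 < L) (k : ℤ) :
    cL L k ^ 2 * (1 + |2 * Real.pi * k / L| ^ 2 + |2 * Real.pi * k / L| ^ 4) = 2 / L := by
  rw [cL, Real.sq_sqrt (by positivity), sq_abs, Even.pow_abs (by decide)]
  field_simp

theorem isNoiseMode_psi (hL : 0 < L) (k : ℤ) : IsNoiseMode L (2 / L) (psi L k) where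
  contDiff := by
    obtain ⟨a, φ, -, hpsi⟩ := exists_psi_eq_const_mul_cos L k
    rw [hpsi]
    fun_prop
  periodic x := by
    obtain ⟨a, φ, -, hpsi⟩ := exists_psi_eq_const_mul_cos L k
    have harg : 2 * Real.pi * k / L * (x + L) + φ
        = 2 * Real.pi * k / L * x + φ + k * (2 * Real.pi) := by
      field_simp
      ring
    simp only [hpsi, harg, Real.cos_add_int_mul_two_pi]
  abs_mul_le i j hij x := by
    have hc : 0 ≤ cL L k := Real.sqrt_nonneg _
    calc |deriv^[i] (psi L k) x * deriv^[j] (psi L k) x|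
        ≤ (cL L k * |2 * Real.pi * k / L| ^ i) * (cL L k * |2 * Real.pi * k / L| ^ j) :=
          (abs_mul _ _).trans_le <| mul_le_mul (abs_iterate_deriv_psi_le L k i x)
            (abs_iterate_deriv_psi_le L k j x) (abs_nonneg _) (by positivity)
      _ = cL L k ^ 2 * |2 * Real.pi * k / L| ^ (i + j) := by ring
      _ ≤ cL L k ^ 2 * (1 + |2 * Real.pi * k / L| ^ 2 + |2 * Real.pi * k / L| ^ 4) := by
          gcongr
          exact pow_le_one_add_sq_add_pow_four (abs_nonneg _) hij.2.2
      _ = 2 / L := cL_sq_mul hL k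

end TrigonometricBasis

theorem local_monotonicity_estimate_general {ι : Type*} [Countable ι] {L K : ℝ} (hL : 0 < L)
    {B lam gam : ι → ℝ} {Ψ : ι → ℝ → ℝ} (hΨ : ∀ k, IsNoiseMode L (B k) (Ψ k))
    (hlam : Summable fun k => lam k ^ 2 * B k) (hgam : Summable fun k => gam k ^ 2 * B k)
    {f : ℝ → ℝ} (hf : ContDiff ℝ 1 f) (hfb : ∀ s, |deriv f s| ≤ K)
    (hflip : ∀ s t, |deriv f s - deriv f t| ≤ K * |s - t|) :
    ∃ C, 0 < C ∧ ∀ ε ≤ 1, ∀ u v : ℝ → ℝ, ContDiff ℝ 3 u → Function.Periodic u L →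
      ContDiff ℝ 3 v → Function.Periodic v L →
        2 * (∫ x in (0 : ℝ)..L, transportDrift Ψ lam ε (u - v) x * (u - v) x)
          + 2 * (∫ x in (0 : ℝ)..L, deriv (transportDrift Ψ lam ε (u - v)) x * deriv (u - v) x)
          + (∑' k, lam k ^ 2 * norm12sq L (deriv fun y => Ψ k y * (u - v) y))
          + (∑' k, gam k ^ 2 * norm12sq L fun y => Ψ k y * (f (u y) - f (v y)))
          ≤ C * (1 + norm12sq L v) * norm12sq L (u - v) - 2 * ε * norm22sq L (u - v) := by
  have hB (a : ι → ℝ) : 0 ≤ ∑' k, a k ^ 2 * B k :=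
    tsum_nonneg fun k => mul_nonneg (sq_nonneg _) (hΨ k).nonneg
  have hΛ := hB lam
  have hΓ := hB gam
  set Λ := ∑' k, lam k ^ 2 * B k
  set Γ := ∑' k, gam k ^ 2 * B k
  refine ⟨10 * Λ + 2 + 3 * Γ * (2 * K ^ 2 * (1 / L + 1)), by positivity, ?_⟩
  intro ε hε u v hu hup hv hvp
  have hu₁ : ContDiff ℝ 1 u := hu.of_le (by norm_num)
  have hv₁ : ContDiff ℝ 1 v := hv.of_le (by norm_num)
  have hdrift := transportDrift_energy_le hL hε hΨ hlam (hu.sub hv) (hup.sub hvp)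
  have hnoise := tsum_mul_norm12sq_mul_le hL.le hΨ hgam ((hf.comp hu₁).sub (hf.comp hv₁))
  have hlip := norm12sq_comp_sub_comp_le hL hf hfb hflip hu₁ hv₁
  have hv₀ : 0 ≤ norm12sq L v := norm12sq_nonneg hL.le v
  have hw₀ : 0 ≤ norm12sq L (u - v) := norm12sq_nonneg hL.le _
  calc _ ≤ ((10 * Λ + 2) * norm12sq L (u - v) - 2 * ε * norm22sq L (u - v))
        + 3 * Γ * (2 * K ^ 2 * (1 / L + 1) * (1 + norm12sq L v) * norm12sq L (u - v)) :=
        add_le_add hdrift (hnoise.trans (mul_le_mul_of_nonneg_left hlip (by positivity)))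
    _ ≤ _ := by
        have hmono : 0 ≤ (10 * Λ + 2) * norm12sq L v * norm12sq L (u - v) := by positivity
        linarith

/-- Local monotonicity estimate (condition (H2')) for the drift `A^ε` together with the
noise coefficients, with a constant independent of `ε`, `u` and `v`. -/
theorem local_monotonicity_estimate (L : ℝ) (hL : 0 < L)
    (lam gam : ℤ → ℝ) (hpos : ∀ k : ℤ, 0 ≤ lam k)
    (hsum : Summable fun k : ℤ => (lam k) ^ 2 + (gam k) ^ 2)
    (f : ℝ → ℝ) (K : ℝ) (hf : ContDiff ℝ 1 f) (hf0 : f 0 = 0)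
    (hfb : ∀ s : ℝ, |deriv f s| ≤ K)
    (hflip : ∀ s t : ℝ, |deriv f s - deriv f t| ≤ K * |s - t|) :
    ∃ C : ℝ, 0 < C ∧
      ∀ ε : ℝ, 0 < ε → ε ≤ 1 →
      ∀ u v : ℝ → ℝ, ContDiff ℝ (⊤ : ℕ∞) u → (∀ x : ℝ, u (x + L) = u x) →
        ContDiff ℝ (⊤ : ℕ∞) v → (∀ x : ℝ, v (x + L) = v x) →
        2 * (∫ x in (0 : ℝ)..L,
              Aop L lam ε (fun y => u y - v y) x * (u x - v x))
          + 2 * (∫ x in (0 : ℝ)..L,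
              deriv (Aop L lam ε (fun y => u y - v y)) x
                * deriv (fun y => u y - v y) x)
          + (∑' k : ℤ, (lam k) ^ 2
              * ∫ x in (0 : ℝ)..L,
                  ((deriv (fun y => psi L k y * (u y - v y)) x) ^ 2
                    + (deriv (deriv (fun y => psi L k y * (u y - v y))) x) ^ 2))
          + (∑' k : ℤ, (gam k) ^ 2
              * ∫ x in (0 : ℝ)..L,
                  ((psi L k x * (f (u x) - f (v x))) ^ 2
                    + (deriv (fun y => psi L k y * (f (u y) - f (v y))) x) ^ 2))
          ≤ C * (1 + norm22sq L v) * norm12sq L (fun x => u x - v x)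
            - 2 * ε * norm22sq L (fun x => u x - v x) := by
  have hweight {a : ℤ → ℝ} (ha : ∀ k, a k ^ 2 ≤ lam k ^ 2 + gam k ^ 2) :
      Summable fun k => a k ^ 2 * (2 / L) :=
    (hsum.of_nonneg_of_le (fun _ => sq_nonneg _) ha).mul_right _
  obtain ⟨C, hC, hCle⟩ := local_monotonicity_estimate_general hL (isNoiseMode_psi hL)
    (hweight fun _ => le_add_of_nonneg_right (sq_nonneg _))
    (hweight fun _ => le_add_of_nonneg_left (sq_nonneg _)) hf hfb hflip
  refine ⟨C, hC, fun ε _ hε u v hu hup hv hvp => ?_⟩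
  have hsmooth (n : ℕ) {g : ℝ → ℝ} (hg : ContDiff ℝ (⊤ : ℕ∞) g) : ContDiff ℝ n g :=
    hg.of_le (by exact_mod_cast le_top)
  have hw₀ : 0 ≤ norm12sq L fun x => u x - v x := norm12sq_nonneg hL.le _
  calc _ ≤ C * (1 + norm12sq L v) * norm12sq L (fun x => u x - v x)
        - 2 * ε * norm22sq L (fun x => u x - v x) :=
        hCle ε hε u v (hsmooth 3 hu) hup (hsmooth 3 hv) hvp
    _ ≤ _ := by
        gcongr
        exact norm12sq_le_norm22sq hL.le (hsmooth 2 hv)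

end
end
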